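/- There exists a constant C > 0 such that for every m ≥ 1, N = 2^m, every integer k with 1 ≤ k ≤ m, and every function u that is four times continuously differentiable on a neighbourhood of [0,1]² and vanishes on the boundary of [0,1]², one has |||u − I^{(k)}_{N,N}u||| ≤ C ( N^{−1} |u|₂ + 4^{k+1} N^{−3} ‖∂⁴u/∂x²∂y²‖_{0,Ω} ). -/

import Mathlib

open MeasureTheory Finset

noncomputable section

/-- The hat function `ψ_i^N` on the uniform mesh of `[0,1]` with `N` intervals. -/
def hat (N i : ℕ) (x : ℝ) : ℝ :=
  if ((i : ℝ) - 1) / N ≤ x ∧ x ≤ (i : ℝ) / N then N * (x - ((i : ℝ) - 1) / N)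
  else if (i : ℝ) / N ≤ x ∧ x ≤ ((i : ℝ) + 1) / N then N * (((i : ℝ) + 1) / N - x)
  else 0

/-- The nodal piecewise bilinear interpolant `I_{Nx,Ny} u`. -/
def interp (Nx Ny : ℕ) (u : ℝ × ℝ → ℝ) : ℝ × ℝ → ℝ := fun p =>
  ∑ i ∈ range (Nx + 1), ∑ j ∈ range (Ny + 1),
    u ((i : ℝ) / Nx, (j : ℝ) / Ny) * hat Nx i p.1 * hat Ny j p.2

/-- The one-directional interpolant `I_{Nx,0} u` (interpolation in the `x`-direction only). -/
def interpX (Nx : ℕ) (u : ℝ × ℝ → ℝ) : ℝ × ℝ → ℝ := fun p =>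
  ∑ i ∈ range (Nx + 1), u ((i : ℝ) / Nx, p.2) * hat Nx i p.1

/-- The one-directional interpolant `I_{0,Ny} u` (interpolation in the `y`-direction only). -/
def interpY (Ny : ℕ) (u : ℝ × ℝ → ℝ) : ℝ × ℝ → ℝ := fun p =>
  ∑ j ∈ range (Ny + 1), u (p.1, (j : ℝ) / Ny) * hat Ny j p.2

/-- The two-scale interpolant `Î_{N,N} u = I_{N,σ}u + I_{σ,N}u − I_{σ,σ}u`. -/
def twoScale (N σ : ℕ) (u : ℝ × ℝ → ℝ) : ℝ × ℝ → ℝ := fun p =>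
  interp N σ u p + interp σ N u p - interp σ σ u p

/-- The multiscale interpolant
`I^{(k)}_{N,N} u = Σ_{i=0}^{k} I_{N/2^i, N/2^{k−i}}u − Σ_{i=1}^{k} I_{N/2^i, N/2^{k+1−i}}u`. -/
def msInterp (N k : ℕ) (u : ℝ × ℝ → ℝ) : ℝ × ℝ → ℝ := fun p =>
  ∑ i ∈ range (k + 1), interp (N / 2 ^ i) (N / 2 ^ (k - i)) u p
    - ∑ i ∈ Finset.Icc 1 k, interp (N / 2 ^ i) (N / 2 ^ (k + 1 - i)) u p

/-- The closed square `[0,1]²`. -/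
def unitSquare : Set (ℝ × ℝ) := Set.Icc (0 : ℝ) 1 ×ˢ Set.Icc (0 : ℝ) 1

/-- The open square `Ω = (0,1)²`. -/
def Omega2 : Set (ℝ × ℝ) := Set.Ioo (0 : ℝ) 1 ×ˢ Set.Ioo (0 : ℝ) 1

/-- Partial derivative in `x` (defined a.e. for Lipschitz functions; junk value `0` elsewhere). -/
def pderivX (v : ℝ × ℝ → ℝ) : ℝ × ℝ → ℝ := fun p => deriv (fun x => v (x, p.2)) p.1

/-- Partial derivative in `y` (defined a.e. for Lipschitz functions; junk value `0` elsewhere). -/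
def pderivY (v : ℝ × ℝ → ℝ) : ℝ × ℝ → ℝ := fun p => deriv (fun y => v (p.1, y)) p.2

/-- The `L²(Ω)` norm `‖v‖_{0,Ω}`. -/
def L2norm (v : ℝ × ℝ → ℝ) : ℝ := Real.sqrt (∫ p in Omega2, (v p) ^ 2)

/-- The energy norm `|||v||| = (∫_Ω |∇v|² + ∫_Ω v²)^{1/2}`, gradients taken a.e. -/
def energyNorm (v : ℝ × ℝ → ℝ) : ℝ :=
  Real.sqrt (∫ p in Omega2, ((pderivX v p) ^ 2 + (pderivY v p) ^ 2 + (v p) ^ 2))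

/-- `u` is four times continuously differentiable on a neighbourhood of `[0,1]²`. -/
def C4Near (u : ℝ × ℝ → ℝ) : Prop :=
  ∃ U : Set (ℝ × ℝ), IsOpen U ∧ unitSquare ⊆ U ∧ ContDiffOn ℝ 4 u U

/-- `u` vanishes on the boundary of `[0,1]²`. -/
def VanishOnBoundary (u : ℝ × ℝ → ℝ) : Prop :=
  ∀ p ∈ unitSquare, (p.1 = 0 ∨ p.1 = 1 ∨ p.2 = 0 ∨ p.2 = 1) → u p = 0

/-- The seminorm `|u|₂ = ‖u_xx‖_{0,Ω} + ‖u_xy‖_{0,Ω} + ‖u_yy‖_{0,Ω}`. -/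
def semi2 (u : ℝ × ℝ → ℝ) : ℝ :=
  L2norm (pderivX (pderivX u)) + L2norm (pderivX (pderivY u)) + L2norm (pderivY (pderivY u))

/-- The mixed fourth derivative `∂⁴u/∂x²∂y²`. -/
def uxxyy (u : ℝ × ℝ → ℝ) : ℝ × ℝ → ℝ := pderivX (pderivX (pderivY (pderivY u)))

/-- The bilinear form `B(v,w) = ∫_Ω ∇v·∇w + ∫_Ω v w`, gradients taken a.e. -/
def Bform (v w : ℝ × ℝ → ℝ) : ℝ :=
  ∫ p in Omega2, (pderivX v p * pderivX w p + pderivY v p * pderivY w p + v p * w p)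

/-!
Let `E^x_N` and `E^y_N` be the errors of interpolation in one direction. These operators commute
and `I_{M,N} = (1 - E^x_M)(1 - E^y_N) = 1 - E^x_M - E^y_N + E^x_M E^y_N`. In the multiscale
combination the one-directional errors telescope, so that `u - I^{(k)}_{N,N} u` consists of
`E^x_N u + E^y_N u` and of the mixed errors `E^x_{N/2^i} E^y_{N/2^j} u` with `i + j = k` or
`i + j = k + 1`. The one-directional errors are of first order in second derivatives of `u`. A
mixed error applies a one-dimensional estimate in each direction, which costs
`N⁻³ 2^{i+j} (2^i + 2^j) ‖∂⁴u/∂x²∂y²‖`, and summing the geometric series gives `4^{k+1} N⁻³`.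

A cut-off reduces the claim to globally `C⁴` functions, and exchanging the coordinates turns the
estimates in the `x`-direction into those in the `y`-direction.
-/

open scoped ENNReal

section IntervalEstimates

variable {g : ℝ → ℝ} {a b x y : ℝ}

theorem abs_sub_le_integral_abs_deriv (hg : ContDiff ℝ 1 g) (hx : x ∈ Set.Icc a b)
    (hy : y ∈ Set.Icc a b) : |g x - g y| ≤ ∫ t in a..b, |deriv g t| := by
  wlog hyx : y ≤ x generalizing x y
  · rw [abs_sub_comm]
    exact this hy hx (le_of_not_ge hyx)
  have hg' : Continuous (deriv g) := hg.continuous_deriv le_rfl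
  calc |g x - g y| = |∫ t in y..x, deriv g t| := by
        rw [intervalIntegral.integral_deriv_eq_sub
          (fun t _ => hg.differentiable one_ne_zero t) (hg'.intervalIntegrable _ _)]
    _ ≤ ∫ t in y..x, |deriv g t| := intervalIntegral.abs_integral_le_integral_abs hyx
    _ ≤ ∫ t in a..b, |deriv g t| :=
        intervalIntegral.integral_mono_interval hy.1 hyx hx.2
          (Filter.Eventually.of_forall fun t => abs_nonneg _) (hg'.abs.intervalIntegrable _ _)

theorem abs_sub_chord_le_integral_abs_deriv (hg : ContDiff ℝ 1 g) (hx : x ∈ Set.Ioo a b) :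
    |g x - (g a + slope g a b * (x - a))| ≤ ∫ t in a..b, |deriv g t| := by
  have hab : a < b := hx.1.trans hx.2
  have hba : 0 < b - a := sub_pos.2 hab
  have hxI : x ∈ Set.Icc a b := Set.Ioo_subset_Icc_self hx
  have hxa := abs_sub_le_integral_abs_deriv hg hxI (Set.left_mem_Icc.2 hab.le)
  have hxb := abs_sub_le_integral_abs_deriv hg hxI (Set.right_mem_Icc.2 hab.le)
  have hconvex : (b - a) * (g x - (g a + slope g a b * (x - a))) =
      (b - x) * (g x - g a) + (x - a) * (g x - g b) := by
    rw [slope_def_field]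
    field_simp
    ring
  refine le_of_mul_le_mul_left ?_ hba
  calc (b - a) * |g x - (g a + slope g a b * (x - a))|
      = |(b - x) * (g x - g a) + (x - a) * (g x - g b)| := by
        rw [← hconvex, abs_mul, abs_of_pos hba]
    _ ≤ (b - x) * |g x - g a| + (x - a) * |g x - g b| := by
        refine (abs_add_le _ _).trans_eq ?_
        rw [abs_mul, abs_mul, abs_of_pos (sub_pos.2 hx.1), abs_of_pos (sub_pos.2 hx.2)]
    _ ≤ (b - x) * (∫ t in a..b, |deriv g t|) + (x - a) * ∫ t in a..b, |deriv g t| :=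
        add_le_add (mul_le_mul_of_nonneg_left hxa (sub_pos.2 hx.2).le)
          (mul_le_mul_of_nonneg_left hxb (sub_pos.2 hx.1).le)
    _ = (b - a) * ∫ t in a..b, |deriv g t| := by ring

theorem abs_deriv_sub_slope_le_integral_abs_deriv_deriv (hg : ContDiff ℝ 2 g)
    (hx : x ∈ Set.Ioo a b) :
    |deriv g x - slope g a b| ≤ ∫ t in a..b, |deriv (deriv g) t| := by
  have hg1 : Differentiable ℝ g := hg.differentiable two_ne_zero
  obtain ⟨ξ, hξ, hslope⟩ := exists_deriv_eq_slope g (hx.1.trans hx.2) hg1.continuous.continuousOn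
    hg1.differentiableOn
  rw [slope_def_field, ← hslope]
  exact abs_sub_le_integral_abs_deriv (hg.deriv' (n := 1)) (Set.Ioo_subset_Icc_self hx)
    (Set.Ioo_subset_Icc_self hξ)

theorem abs_sub_chord_le_integral_abs_deriv_deriv (hg : ContDiff ℝ 2 g) (hx : x ∈ Set.Ioo a b) :
    |g x - (g a + slope g a b * (x - a))| ≤ (b - a) * ∫ t in a..b, |deriv (deriv g) t| := by
  have hg1 : Differentiable ℝ g := hg.differentiable two_ne_zero
  obtain ⟨ξ, hξ, hslope⟩ := exists_deriv_eq_slope g hx.1 hg1.continuous.continuousOn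
    hg1.differentiableOn
  have hξ' : |deriv g ξ - slope g a b| ≤ ∫ t in a..b, |deriv (deriv g) t| :=
    abs_deriv_sub_slope_le_integral_abs_deriv_deriv hg ⟨hξ.1, hξ.2.trans hx.2⟩
  have hfactor : g x - (g a + slope g a b * (x - a)) =
      (x - a) * (deriv g ξ - slope g a b) := by
    have := (sub_pos.2 hx.1).ne'
    rw [hslope]
    field_simp
    ring
  rw [hfactor, abs_mul, abs_of_pos (sub_pos.2 hx.1)]
  exact mul_le_mul (sub_le_sub_right hx.2.le a) hξ' (abs_nonneg _)
    (sub_pos.2 (hx.1.trans hx.2)).le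

theorem eLpNorm_restrict_Ioo_le_of_abs_le_integral_abs {f q : ℝ → ℝ} {p : ℝ≥0∞} (hp : 1 ≤ p)
    {c : ℝ} (hc : 0 ≤ c) (hab : a ≤ b) (hq : Continuous q)
    (hf : ∀ x ∈ Set.Ioo a b, |f x| ≤ c * ∫ t in a..b, |q t|) :
    eLpNorm f p (volume.restrict (Set.Ioo a b)) ≤
      ENNReal.ofReal (c * (b - a)) * eLpNorm q p (volume.restrict (Set.Ioo a b)) := by
  set μ := volume.restrict (Set.Ioo a b) with hμ
  have hμ_univ : μ Set.univ = ENNReal.ofReal (b - a) := by simp [hμ]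
  have hL1 : ENNReal.ofReal (∫ t in a..b, |q t|) = eLpNorm q 1 μ := by
    rw [intervalIntegral.integral_of_le hab, integral_Ioc_eq_integral_Ioo,
      eLpNorm_one_eq_lintegral_enorm]
    exact ofReal_integral_norm_eq_lintegral_enorm
      (hq.integrableOn_Ioc.mono_set Set.Ioo_subset_Ioc_self)
  have hsup : ∀ᵐ x ∂μ, ‖f x‖ₑ ≤ ENNReal.ofReal c * eLpNorm q 1 μ :=
    ae_restrict_of_forall_mem measurableSet_Ioo fun x hx => by
      rw [Real.enorm_eq_ofReal_abs, ← hL1, ← ENNReal.ofReal_mul hc]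
      exact ENNReal.ofReal_le_ofReal (hf x hx)
  have hexp : 0 ≤ 1 - p.toReal⁻¹ := by
    rw [← ENNReal.toReal_inv, sub_nonneg]
    exact ENNReal.toReal_le_of_le_ofReal zero_le_one (by simpa using hp)
  have hHolder : eLpNorm q 1 μ ≤ eLpNorm q p μ * ENNReal.ofReal (b - a) ^ (1 - p.toReal⁻¹) := by
    simpa [hμ_univ] using
      eLpNorm_le_eLpNorm_mul_rpow_measure_univ hp hq.aestronglyMeasurable (μ := μ)
  calc eLpNorm f p μ
      ≤ ENNReal.ofReal c * eLpNorm q 1 μ * ENNReal.ofReal (b - a) ^ p.toReal⁻¹ := by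
        simpa only [hμ_univ, smul_eq_mul] using eLpNorm_le_of_ae_enorm_bound (p := p) hsup
    _ ≤ ENNReal.ofReal c * (eLpNorm q p μ * ENNReal.ofReal (b - a) ^ (1 - p.toReal⁻¹)) *
          ENNReal.ofReal (b - a) ^ p.toReal⁻¹ := by gcongr
    _ = ENNReal.ofReal c * eLpNorm q p μ *
          ENNReal.ofReal (b - a) ^ (1 - p.toReal⁻¹ + p.toReal⁻¹) := by
        rw [ENNReal.rpow_add_of_nonneg _ _ hexp (by positivity)]
        ring
    _ = ENNReal.ofReal (c * (b - a)) * eLpNorm q p μ := by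
        rw [sub_add_cancel, ENNReal.rpow_one, ENNReal.ofReal_mul hc]
        ring

end IntervalEstimates

section LpNorm

variable {α β E F : Type*} [MeasurableSpace α] [MeasurableSpace β] [NormedAddCommGroup E]
  [NormedAddCommGroup F] {μ : Measure α} {ν : Measure β} {p c : ℝ≥0∞}

theorem eLpNorm_le_mul_eLpNorm_iff_lintegral (hp₀ : p ≠ 0) (hp : p ≠ ∞) {f : α → E} {g : β → F} :
    eLpNorm f p μ ≤ c * eLpNorm g p ν ↔
      ∫⁻ x, ‖f x‖ₑ ^ p.toReal ∂μ ≤ c ^ p.toReal * ∫⁻ x, ‖g x‖ₑ ^ p.toReal ∂ν := by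
  have hpos : 0 < p.toReal := ENNReal.toReal_pos hp₀ hp
  rw [eLpNorm_eq_lintegral_rpow_enorm_toReal hp₀ hp, eLpNorm_eq_lintegral_rpow_enorm_toReal hp₀ hp,
    one_div, ENNReal.rpow_inv_le_iff hpos, ENNReal.mul_rpow_of_nonneg _ _ hpos.le,
    ENNReal.rpow_inv_rpow hpos.ne']

theorem eLpNorm_restrict_biUnion_le_mul {ι : Type*} (hp₀ : p ≠ 0) (hp : p ≠ ∞) {f : α → E}
    {g : α → F} {s : Finset ι} {A : ι → Set α} (hdisj : (s : Set ι).PairwiseDisjoint A)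
    (hA : ∀ i ∈ s, MeasurableSet (A i))
    (hfg : ∀ i ∈ s, eLpNorm f p (μ.restrict (A i)) ≤ c * eLpNorm g p (μ.restrict (A i))) :
    eLpNorm f p (μ.restrict (⋃ i ∈ s, A i)) ≤ c * eLpNorm g p (μ.restrict (⋃ i ∈ s, A i)) := by
  simp only [eLpNorm_le_mul_eLpNorm_iff_lintegral hp₀ hp, lintegral_biUnion_finset hdisj hA,
    Finset.mul_sum] at hfg ⊢
  exact Finset.sum_le_sum hfg

theorem eLpNorm_prod_le_mul_of_forall_slice [SFinite μ] [SFinite ν] (hp₀ : p ≠ 0) (hp : p ≠ ∞)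
    {f : α × β → E} {g : α × β → F} (hg : AEStronglyMeasurable g (μ.prod ν))
    (hfg : ∀ y, eLpNorm (fun x => f (x, y)) p μ ≤ c * eLpNorm (fun x => g (x, y)) p μ) :
    eLpNorm f p (μ.prod ν) ≤ c * eLpNorm g p (μ.prod ν) := by
  simp only [eLpNorm_le_mul_eLpNorm_iff_lintegral hp₀ hp] at hfg ⊢
  calc ∫⁻ z, ‖f z‖ₑ ^ p.toReal ∂μ.prod ν
      = ∫⁻ z, ‖f z.swap‖ₑ ^ p.toReal ∂ν.prod μ := (lintegral_prod_swap _).symm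
    _ ≤ ∫⁻ y, ∫⁻ x, ‖f (x, y)‖ₑ ^ p.toReal ∂μ ∂ν := lintegral_prod_le _
    _ ≤ ∫⁻ y, c ^ p.toReal * ∫⁻ x, ‖g (x, y)‖ₑ ^ p.toReal ∂μ ∂ν := lintegral_mono hfg
    _ = c ^ p.toReal * ∫⁻ z, ‖g z‖ₑ ^ p.toReal ∂μ.prod ν := by
        have hg' := hg.enorm.pow_const p.toReal
        rw [lintegral_const_mul'' _ hg'.lintegral_prod_left', lintegral_prod_symm _ hg']

end LpNorm

theorem hat_eq_max {N : ℕ} (hN : 0 < N) (i : ℕ) (x : ℝ) :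
    hat N i x = max 0 (1 - |(N : ℝ) * x - i|) := by
  have hN' : (0 : ℝ) < N := mod_cast hN
  unfold hat
  simp only [div_le_iff₀ hN', le_div_iff₀ hN']
  split_ifs with hleft hright
  · rw [abs_of_nonpos (by linarith), max_eq_right (by linarith)]
    field_simp
    ring
  · rw [abs_of_nonneg (by linarith), max_eq_right (by linarith)]
    field_simp
    ring
  · rw [max_eq_left]
    by_contra! hpos
    have habs : |(N : ℝ) * x - i| < 1 := by linarith
    rw [abs_lt] at habs
    rcases le_total ((N : ℝ) * x) i with h | h
    · exact hleft ⟨by linarith, by linarith⟩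
    · exact hright ⟨by linarith, by linarith⟩

theorem lipschitzWith_hat (N i : ℕ) : LipschitzWith N (hat N i) := by
  rcases N.eq_zero_or_pos with rfl | hN
  · have hzero : hat 0 i = fun _ => 0 := by
      funext x
      simp [hat]
    rw [hzero]
    exact LipschitzWith.const' 0
  · rw [funext (hat_eq_max hN i)]
    refine (LipschitzWith.of_dist_le_mul fun x y => ?_).const_max 0
    rw [Real.dist_eq, Real.dist_eq, sub_sub_sub_cancel_left, abs_sub_comm]
    refine (abs_abs_sub_abs_le _ _).trans_eq ?_
    rw [sub_sub_sub_cancel_right, ← mul_sub, abs_mul]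
    simp

theorem ae_differentiableAt_hat (N : ℕ) : ∀ᵐ x, ∀ i, DifferentiableAt ℝ (hat N i) x :=
  ae_all_iff.2 fun i => (lipschitzWith_hat N i).ae_differentiableAt_real

section LinInterp

/-- The nodal piecewise linear interpolant, on the uniform mesh of `[0,1]` with `N` intervals, of a
function of one variable. It is `interpX` along horizontal lines and `interpY` along vertical ones,
where the error estimates are proved. -/
def linInterp (N : ℕ) (g : ℝ → ℝ) (x : ℝ) : ℝ :=
  ∑ i ∈ range (N + 1), g ((i : ℝ) / N) * hat N i x

variable {N i : ℕ} {g : ℝ → ℝ} {p : ℝ≥0∞} {x : ℝ}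

theorem linInterp_eq_chord (hi : i < N) (g : ℝ → ℝ)
    (hx : x ∈ Set.Ioo ((i : ℝ) / N) ((i + 1 : ℕ) / N)) :
    linInterp N g x = g (i / N) + slope g (i / N) ((i + 1 : ℕ) / N) * (x - i / N) := by
  have hN' : (0 : ℝ) < N := mod_cast i.zero_le.trans_lt hi
  obtain ⟨hix, hxi⟩ := hx
  rw [div_lt_iff₀ hN', mul_comm] at hix
  rw [lt_div_iff₀ hN', mul_comm] at hxi
  push_cast at hxi
  have hhat : ∀ j, hat N j x = max 0 (1 - |(N : ℝ) * x - j|) :=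
    fun j => hat_eq_max (i.zero_le.trans_lt hi) j x
  have hfar : ∀ j ∈ range (N + 1), j ≠ i ∧ j ≠ i + 1 → g ((j : ℝ) / N) * hat N j x = 0 := by
    rintro j - ⟨hji, hji'⟩
    rw [hhat, max_eq_left, mul_zero]
    rcases hji.lt_or_gt with h | h
    · have : (j : ℝ) + 1 ≤ i := mod_cast h
      linarith [le_abs_self ((N : ℝ) * x - j)]
    · have : (i : ℝ) + 1 + 1 ≤ j := mod_cast (by omega : i + 1 + 1 ≤ j)
      linarith [neg_abs_le ((N : ℝ) * x - j)]
  rw [linInterp, Finset.sum_eq_add i (i + 1) (by omega) hfar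
    (fun h => absurd (mem_range.2 (by omega)) h) (fun h => absurd (mem_range.2 (by omega)) h),
    hhat, hhat, slope_def_field]
  push_cast
  rw [abs_of_nonneg (by linarith), abs_of_nonpos (by linarith), max_eq_right (by linarith),
    max_eq_right (by linarith)]
  field_simp
  ring

theorem deriv_sub_linInterp (hi : i < N) (hg : DifferentiableAt ℝ g x)
    (hx : x ∈ Set.Ioo ((i : ℝ) / N) ((i + 1 : ℕ) / N)) :
    deriv (fun t => g t - linInterp N g t) x =
      deriv g x - slope g (i / N) ((i + 1 : ℕ) / N) := by
  have hchord : HasDerivAt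
      (fun t => g (i / N) + slope g (i / N : ℝ) ((i + 1 : ℕ) / N) * (t - i / N))
      (slope g (i / N : ℝ) ((i + 1 : ℕ) / N)) x := by
    simpa using (((hasDerivAt_id x).sub_const ((i : ℝ) / N)).const_mul
      (slope g (i / N : ℝ) ((i + 1 : ℕ) / N))).const_add (g (i / N))
  have hlin : HasDerivAt (linInterp N g) (slope g (i / N : ℝ) ((i + 1 : ℕ) / N)) x :=
    hchord.congr_of_eventuallyEq <| by
      filter_upwards [isOpen_Ioo.mem_nhds hx] with t ht using linInterp_eq_chord hi g ht
  exact (hg.hasDerivAt.sub hlin).deriv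

theorem cell_width (N i : ℕ) : ((i + 1 : ℕ) : ℝ) / N - i / N = (N : ℝ)⁻¹ := by
  push_cast
  ring

theorem ofReal_inv_natCast (hN : 0 < N) : ENNReal.ofReal (N : ℝ)⁻¹ = (N : ℝ≥0∞)⁻¹ := by
  rw [ENNReal.ofReal_inv_of_pos (mod_cast hN), ENNReal.ofReal_natCast]

theorem eLpNorm_le_of_forall_cell_abs_le {f q : ℝ → ℝ} {c : ℝ} (hp₁ : 1 ≤ p) (hp : p ≠ ∞)
    (hN : 0 < N) (hc : 0 ≤ c) (hq : Continuous q)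
    (hfq : ∀ i < N, ∀ x ∈ Set.Ioo ((i : ℝ) / N) ((i + 1 : ℕ) / N),
      |f x| ≤ c * ∫ t in (i / N : ℝ)..(i + 1 : ℕ) / N, |q t|) :
    eLpNorm f p (volume.restrict (Set.Ioo 0 1)) ≤
      ENNReal.ofReal c * (N : ℝ≥0∞)⁻¹ * eLpNorm q p (volume.restrict (Set.Ioo 0 1)) := by
  have hmono : Monotone fun i : ℕ => (i : ℝ) / N := fun i j hij => by dsimp only; gcongr
  have hcells : ⋃ i ∈ range N, Set.Ioc ((i : ℝ) / N) ((i + 1 : ℕ) / N) = Set.Ioc 0 1 := by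
    have hN' : (N : ℝ) ≠ 0 := mod_cast hN.ne'
    simpa [div_self hN'] using hmono.biUnion_Ico_Ioc_map_succ 0 N
  simp only [restrict_Ioo_eq_restrict_Ioc, ← hcells]
  refine eLpNorm_restrict_biUnion_le_mul (one_pos.trans_le hp₁).ne' hp
    (hmono.pairwise_disjoint_on_Ioc_succ.set_pairwise _) (fun _ _ => measurableSet_Ioc)
    fun i hi => ?_
  rw [← restrict_Ioo_eq_restrict_Ioc, ← ofReal_inv_natCast hN, ← ENNReal.ofReal_mul hc,
    ← cell_width N i]
  exact eLpNorm_restrict_Ioo_le_of_abs_le_integral_abs hp₁ hc (hmono i.le_succ) hq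
    (hfq i (mem_range.1 hi))

theorem eLpNorm_sub_linInterp_le_deriv (hp₁ : 1 ≤ p) (hp : p ≠ ∞) (hN : 0 < N)
    (hg : ContDiff ℝ 1 g) :
    eLpNorm (fun x => g x - linInterp N g x) p (volume.restrict (Set.Ioo 0 1)) ≤
      (N : ℝ≥0∞)⁻¹ * eLpNorm (deriv g) p (volume.restrict (Set.Ioo 0 1)) := by
  simpa using eLpNorm_le_of_forall_cell_abs_le hp₁ hp hN zero_le_one (hg.continuous_deriv le_rfl)
    fun i hi x hx => by
      rw [linInterp_eq_chord hi g hx, one_mul]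
      exact abs_sub_chord_le_integral_abs_deriv hg hx

theorem eLpNorm_deriv_sub_linInterp_le (hp₁ : 1 ≤ p) (hp : p ≠ ∞) (hN : 0 < N)
    (hg : ContDiff ℝ 2 g) :
    eLpNorm (deriv fun x => g x - linInterp N g x) p (volume.restrict (Set.Ioo 0 1)) ≤
      (N : ℝ≥0∞)⁻¹ * eLpNorm (deriv (deriv g)) p (volume.restrict (Set.Ioo 0 1)) := by
  have hg' : ContDiff ℝ 1 (deriv g) := hg.deriv'
  simpa using eLpNorm_le_of_forall_cell_abs_le hp₁ hp hN zero_le_one (hg'.continuous_deriv le_rfl)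
    fun i hi x hx => by
      rw [deriv_sub_linInterp hi (hg.differentiable two_ne_zero x) hx, one_mul]
      exact abs_deriv_sub_slope_le_integral_abs_deriv_deriv hg hx

theorem eLpNorm_sub_linInterp_le_deriv_deriv (hp₁ : 1 ≤ p) (hp : p ≠ ∞) (hN : 0 < N)
    (hg : ContDiff ℝ 2 g) :
    eLpNorm (fun x => g x - linInterp N g x) p (volume.restrict (Set.Ioo 0 1)) ≤
      (N : ℝ≥0∞)⁻¹ ^ 2 * eLpNorm (deriv (deriv g)) p (volume.restrict (Set.Ioo 0 1)) := by
  have hg' : ContDiff ℝ 1 (deriv g) := hg.deriv'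
  rw [sq]
  nth_rw 1 [← ofReal_inv_natCast hN]
  exact eLpNorm_le_of_forall_cell_abs_le hp₁ hp hN (by positivity) (hg'.continuous_deriv le_rfl)
    fun i hi x hx => by
      rw [linInterp_eq_chord hi g hx, ← cell_width N i]
      exact abs_sub_chord_le_integral_abs_deriv_deriv hg hx

end LinInterp

section PartialDerivatives

variable {u v : ℝ × ℝ → ℝ} {m n : WithTop ℕ∞}

theorem contDiff_comp_swap (hu : ContDiff ℝ n u) : ContDiff ℝ n (u ∘ Prod.swap) :=
  hu.comp (contDiff_snd.prodMk contDiff_fst)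

theorem pderivY_eq_pderivX_comp_swap (u : ℝ × ℝ → ℝ) :
    pderivY u = pderivX (u ∘ Prod.swap) ∘ Prod.swap := rfl

theorem pderivX_eq_fderiv (hu : Differentiable ℝ u) : pderivX u = fun p => fderiv ℝ u p (1, 0) := by
  funext p
  have hline : HasDerivAt (fun x : ℝ => (x, p.2)) ((1 : ℝ), (0 : ℝ)) p.1 :=
    (hasDerivAt_id p.1).prodMk (hasDerivAt_const p.1 p.2)
  exact ((hu p).hasFDerivAt.comp_hasDerivAt p.1 hline).deriv

theorem pderivY_eq_fderiv (hu : Differentiable ℝ u) : pderivY u = fun p => fderiv ℝ u p (0, 1) := by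
  funext p
  have hline : HasDerivAt (fun y : ℝ => (p.1, y)) ((0 : ℝ), (1 : ℝ)) p.2 :=
    (hasDerivAt_const p.2 p.1).prodMk (hasDerivAt_id p.2)
  exact ((hu p).hasFDerivAt.comp_hasDerivAt p.2 hline).deriv

theorem contDiff_pderivX (hu : ContDiff ℝ n u) (hmn : m + 1 ≤ n) : ContDiff ℝ m (pderivX u) := by
  have hn : n ≠ 0 := by
    rintro rfl
    simp at hmn
  rw [pderivX_eq_fderiv (hu.differentiable hn)]
  exact (hu.fderiv_right hmn).clm_apply contDiff_const

theorem contDiff_pderivY (hu : ContDiff ℝ n u) (hmn : m + 1 ≤ n) : ContDiff ℝ m (pderivY u) :=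
  contDiff_comp_swap (contDiff_pderivX (contDiff_comp_swap hu) hmn)

theorem pderivX_pderivY_comm (hu : ContDiff ℝ 2 u) :
    pderivX (pderivY u) = pderivY (pderivX u) := by
  have hu' : Differentiable ℝ u := hu.differentiable two_ne_zero
  have hu'' : Differentiable ℝ (fderiv ℝ u) :=
    (hu.fderiv_right (m := 1) one_add_one_eq_two.le).differentiable one_ne_zero
  have hX : ContDiff ℝ 1 (pderivX u) := contDiff_pderivX hu one_add_one_eq_two.le
  have hY : ContDiff ℝ 1 (pderivY u) := contDiff_pderivY hu one_add_one_eq_two.le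
  rw [pderivX_eq_fderiv (hY.differentiable one_ne_zero),
    pderivY_eq_fderiv (hX.differentiable one_ne_zero)]
  funext p
  rw [pderivX_eq_fderiv hu', pderivY_eq_fderiv hu',
    fderiv_clm_apply (hu'' p) (differentiableAt_const _),
    fderiv_clm_apply (hu'' p) (differentiableAt_const _)]
  simpa using (hu.contDiffAt.isSymmSndFDerivAt (by simp)) (1, 0) (0, 1)

theorem pderivY_pderivY_pderivX_pderivX (hu : ContDiff ℝ 4 u) :
    pderivY (pderivY (pderivX (pderivX u))) = uxxyy u := by
  have hX : ContDiff ℝ 3 (pderivX u) := contDiff_pderivX hu (by norm_num)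
  have hY : ContDiff ℝ 3 (pderivY u) := contDiff_pderivY hu (by norm_num)
  have hYX : ContDiff ℝ 2 (pderivY (pderivX u)) := contDiff_pderivY hX (by norm_num)
  calc pderivY (pderivY (pderivX (pderivX u)))
      = pderivY (pderivX (pderivY (pderivX u))) := by
        rw [pderivX_pderivY_comm (hX.of_le (by norm_num))]
    _ = pderivX (pderivY (pderivX (pderivY u))) := by
        rw [← pderivX_pderivY_comm hYX, ← pderivX_pderivY_comm (hu.of_le (by norm_num))]
    _ = uxxyy u := by rw [uxxyy, pderivX_pderivY_comm (hY.of_le (by norm_num))]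

theorem measurable_pderivX (hu : Continuous u) : Measurable (pderivX u) :=
  (measurable_deriv_with_param (f := fun y x => u (x, y)) (hu.comp continuous_swap)).comp
    measurable_swap

theorem measurable_pderivY (hu : Continuous u) : Measurable (pderivY u) :=
  (measurable_pderivX (hu.comp continuous_swap)).comp measurable_swap

theorem pderivX_eqOn {s : Set (ℝ × ℝ)} (hs : IsOpen s) (huv : Set.EqOn u v s) :
    Set.EqOn (pderivX u) (pderivX v) s := by
  intro p hp
  have hline : ContinuousAt (fun x : ℝ => (x, p.2)) p.1 := by fun_prop
  refine Filter.EventuallyEq.deriv_eq ?_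
  filter_upwards [hline.preimage_mem_nhds (hs.mem_nhds hp)] with x hx using huv hx

theorem pderivY_eqOn {s : Set (ℝ × ℝ)} (hs : IsOpen s) (huv : Set.EqOn u v s) :
    Set.EqOn (pderivY u) (pderivY v) s := fun p hp =>
  pderivX_eqOn (u := u ∘ Prod.swap) (v := v ∘ Prod.swap) (hs.preimage continuous_swap)
    (fun _ hq => huv hq) (show p.swap ∈ Prod.swap ⁻¹' s from hp)

end PartialDerivatives

section SquareNorm

/-- The `L²(Ω)` norm with values in `[0, ∞]`, for which the estimates need no integrability. -/
def eL2 (f : ℝ × ℝ → ℝ) : ℝ≥0∞ := eLpNorm f 2 (volume.restrict Omega2)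

variable {f g : ℝ × ℝ → ℝ}

theorem volume_restrict_Omega2 :
    (volume : Measure (ℝ × ℝ)).restrict Omega2 =
      (volume.restrict (Set.Ioo 0 1)).prod (volume.restrict (Set.Ioo 0 1)) := by
  rw [Measure.prod_restrict]
  rfl

theorem isOpen_Omega2 : IsOpen Omega2 := isOpen_Ioo.prod isOpen_Ioo

theorem Omega2_subset_unitSquare : Omega2 ⊆ unitSquare :=
  Set.prod_mono Set.Ioo_subset_Icc_self Set.Ioo_subset_Icc_self

theorem eL2_comp_swap (f : ℝ × ℝ → ℝ) : eL2 (f ∘ Prod.swap) = eL2 f := by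
  have hswap := (MeasurableEquiv.prodComm (α := ℝ) (β := ℝ)).measurableEmbedding
  unfold eL2
  rw [volume_restrict_Omega2]
  nth_rw 2 [← Measure.prod_swap]
  exact (hswap.eLpNorm_map_measure (g := f)).symm

theorem L2norm_congr (hfg : Set.EqOn f g Omega2) : L2norm f = L2norm g :=
  congrArg Real.sqrt <| setIntegral_congr_fun isOpen_Omega2.measurableSet fun p hp => by
    simp only [hfg hp]

theorem energyNorm_congr (hfg : Set.EqOn f g Omega2) : energyNorm f = energyNorm g :=
  congrArg Real.sqrt <| setIntegral_congr_fun isOpen_Omega2.measurableSet fun p hp => by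
    simp only [hfg hp, pderivX_eqOn isOpen_Omega2 hfg hp, pderivY_eqOn isOpen_Omega2 hfg hp]

theorem ofReal_L2norm_of_memLp (hf : MemLp f 2 (volume.restrict Omega2)) :
    ENNReal.ofReal (L2norm f) = eL2 f := by
  rw [eL2, hf.eLpNorm_eq_integral_rpow_norm two_ne_zero ENNReal.ofNat_ne_top, L2norm,
    Real.sqrt_eq_rpow]
  simp

theorem ofReal_L2norm_of_continuous (hf : Continuous f) : ENNReal.ofReal (L2norm f) = eL2 f := by
  have hcompact : IsCompact unitSquare := isCompact_Icc.prod isCompact_Icc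
  refine ofReal_L2norm_of_memLp ((memLp_two_iff_integrable_sq hf.aestronglyMeasurable).2 ?_)
  exact ((hf.pow 2).continuousOn.integrableOn_compact hcompact).mono_set Omega2_subset_unitSquare

theorem ofReal_L2norm_le (hf : Measurable f) : ENNReal.ofReal (L2norm f) ≤ eL2 f := by
  rcases (le_top : eL2 f ≤ ∞).lt_or_eq with hfin | htop
  · exact (ofReal_L2norm_of_memLp ⟨hf.aestronglyMeasurable, hfin⟩).le
  · exact le_top.trans_eq htop.symm

/-- The energy norm up to equivalence, with values in `[0, ∞]`: the sum of the `L²(Ω)` norms of the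
function and of its two partial derivatives. -/
def eH1 (f : ℝ × ℝ → ℝ) : ℝ≥0∞ := eL2 (pderivX f) + eL2 (pderivY f) + eL2 f

theorem eH1_comp_swap (f : ℝ × ℝ → ℝ) : eH1 (f ∘ Prod.swap) = eH1 f := by
  have hX : pderivX (f ∘ Prod.swap) = pderivY f ∘ Prod.swap := rfl
  have hY : pderivY (f ∘ Prod.swap) = pderivX f ∘ Prod.swap := rfl
  rw [eH1, eH1, hX, hY, eL2_comp_swap, eL2_comp_swap, eL2_comp_swap, add_comm (eL2 (pderivY f))]

theorem ofReal_energyNorm_le_eH1 (hf : Continuous f) :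
    ENNReal.ofReal (energyNorm f) ≤ eH1 f := by
  have hX := measurable_pderivX hf
  have hY := measurable_pderivY hf
  set G : ℝ × ℝ → ℝ := fun p => √(pderivX f p ^ 2 + pderivY f p ^ 2 + f p ^ 2)
  have henergy : energyNorm f = L2norm G := by
    have hGsq : ∀ p, G p ^ 2 = pderivX f p ^ 2 + pderivY f p ^ 2 + f p ^ 2 :=
      fun p => Real.sq_sqrt (by positivity)
    simp only [energyNorm, L2norm, hGsq]
  have hGle : ∀ p, ‖G p‖ ≤ |pderivX f p| + |pderivY f p| + |f p| := fun p => by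
    rw [Real.norm_of_nonneg (Real.sqrt_nonneg _), Real.sqrt_le_left (by positivity)]
    nlinarith [sq_abs (pderivX f p), sq_abs (pderivY f p), sq_abs (f p),
      mul_nonneg (abs_nonneg (pderivX f p)) (abs_nonneg (pderivY f p)),
      mul_nonneg (abs_nonneg (pderivX f p)) (abs_nonneg (f p)),
      mul_nonneg (abs_nonneg (pderivY f p)) (abs_nonneg (f p))]
  calc ENNReal.ofReal (energyNorm f)
      ≤ eL2 G := henergy ▸ ofReal_L2norm_le (by fun_prop)
    _ ≤ eL2 ((fun p => ‖pderivX f p‖) + (fun p => ‖pderivY f p‖) + fun p => ‖f p‖) :=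
        eLpNorm_mono_real hGle
    _ ≤ eL2 (fun p => ‖pderivX f p‖) + eL2 (fun p => ‖pderivY f p‖) + eL2 fun p => ‖f p‖ :=
        (eLpNorm_add_le (by fun_prop) (by fun_prop) one_le_two).trans
          (add_le_add_left (eLpNorm_add_le (by fun_prop) (by fun_prop) one_le_two) _)
    _ = eH1 f := by simp only [eL2, eH1, eLpNorm_norm]

end SquareNorm

section DirectionalErrors

/-- The error `v - I_{N,0} v` of interpolation in the `x`-direction. -/
def errX (N : ℕ) (v : ℝ × ℝ → ℝ) : ℝ × ℝ → ℝ := fun p => v p - interpX N v p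

/-- The error `v - I_{0,N} v` of interpolation in the `y`-direction. -/
def errY (N : ℕ) (v : ℝ × ℝ → ℝ) : ℝ × ℝ → ℝ := fun p => v p - interpY N v p

variable {M N : ℕ} {v : ℝ × ℝ → ℝ}

theorem errY_eq_errX_comp_swap (N : ℕ) (v : ℝ × ℝ → ℝ) :
    errY N v = errX N (v ∘ Prod.swap) ∘ Prod.swap := rfl

theorem errX_errY_comm (M N : ℕ) (v : ℝ × ℝ → ℝ) : errX M (errY N v) = errY N (errX M v) := by
  funext p
  simp only [errX, errY, interpX, interpY, sub_mul, Finset.sum_sub_distrib, Finset.sum_mul]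
  rw [Finset.sum_comm]
  simp only [mul_right_comm]
  ring

theorem continuous_errX (hv : Continuous v) : Continuous (errX N v) := by
  have hhat : ∀ i, Continuous (hat N i) := fun i => (lipschitzWith_hat N i).continuous
  unfold errX interpX
  fun_prop

theorem continuous_errY (hv : Continuous v) : Continuous (errY N v) :=
  (continuous_errX (hv.comp continuous_swap)).comp continuous_swap

theorem contDiff_sliceX {n : WithTop ℕ∞} (hv : ContDiff ℝ n v) (y : ℝ) :
    ContDiff ℝ n fun x => v (x, y) :=
  hv.comp (contDiff_id.prodMk contDiff_const)

theorem contDiff_errY_sliceX {n : WithTop ℕ∞} (hv : ContDiff ℝ n v) (y : ℝ) :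
    ContDiff ℝ n fun x => errY N v (x, y) :=
  (contDiff_sliceX hv y).sub
    (ContDiff.sum fun j _ => (contDiff_sliceX hv (j / N)).mul (contDiff_const (c := hat N j y)))

theorem pderivX_errY (hv : Differentiable ℝ v) : pderivX (errY N v) = errY N (pderivX v) := by
  have hslice : ∀ x y, HasDerivAt (fun t => v (t, y)) (pderivX v (x, y)) x := fun x y =>
    (hv.comp (differentiable_id.prodMk (differentiable_const y)) x).hasDerivAt
  funext p
  exact ((hslice p.1 p.2).fun_sub (HasDerivAt.fun_sum fun (j : ℕ) _ =>
    (hslice p.1 ((j : ℝ) / N)).mul_const (hat N j p.2))).deriv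

theorem pderivY_errX (hv : Differentiable ℝ v) : pderivY (errX N v) = errX N (pderivY v) := by
  have hswap : Differentiable ℝ (v ∘ Prod.swap) :=
    hv.comp (differentiable_snd.prodMk differentiable_fst)
  exact congrArg (· ∘ Prod.swap) (pderivX_errY hswap)

theorem eL2_le_mul_of_forall_sliceX {f g : ℝ × ℝ → ℝ} {c : ℝ≥0∞} (hg : Measurable g)
    (hfg : ∀ y, eLpNorm (fun x => f (x, y)) 2 (volume.restrict (Set.Ioo 0 1)) ≤
      c * eLpNorm (fun x => g (x, y)) 2 (volume.restrict (Set.Ioo 0 1))) :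
    eL2 f ≤ c * eL2 g := by
  rw [eL2, eL2, volume_restrict_Omega2]
  exact eLpNorm_prod_le_mul_of_forall_slice two_ne_zero ENNReal.ofNat_ne_top
    hg.aestronglyMeasurable hfg

theorem eL2_errX_le_pderivX (hN : 0 < N) (hv : ∀ y, ContDiff ℝ 1 fun x => v (x, y))
    (hv' : Measurable (pderivX v)) : eL2 (errX N v) ≤ (N : ℝ≥0∞)⁻¹ * eL2 (pderivX v) :=
  eL2_le_mul_of_forall_sliceX hv' fun y =>
    eLpNorm_sub_linInterp_le_deriv (g := fun x => v (x, y))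
      one_le_two ENNReal.ofNat_ne_top hN (hv y)

theorem eL2_pderivX_errX_le (hN : 0 < N) (hv : ∀ y, ContDiff ℝ 2 fun x => v (x, y))
    (hv' : Measurable (pderivX (pderivX v))) :
    eL2 (pderivX (errX N v)) ≤ (N : ℝ≥0∞)⁻¹ * eL2 (pderivX (pderivX v)) :=
  eL2_le_mul_of_forall_sliceX hv' fun y =>
    eLpNorm_deriv_sub_linInterp_le (g := fun x => v (x, y))
      one_le_two ENNReal.ofNat_ne_top hN (hv y)

theorem eL2_errX_le (hN : 0 < N) (hv : ∀ y, ContDiff ℝ 2 fun x => v (x, y))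
    (hv' : Measurable (pderivX (pderivX v))) :
    eL2 (errX N v) ≤ (N : ℝ≥0∞)⁻¹ ^ 2 * eL2 (pderivX (pderivX v)) :=
  eL2_le_mul_of_forall_sliceX hv' fun y =>
    eLpNorm_sub_linInterp_le_deriv_deriv (g := fun x => v (x, y))
      one_le_two ENNReal.ofNat_ne_top hN (hv y)

theorem eL2_errY_le (hN : 0 < N) (hv : ContDiff ℝ 2 v) :
    eL2 (errY N v) ≤ (N : ℝ≥0∞)⁻¹ ^ 2 * eL2 (pderivY (pderivY v)) := by
  have hswap : ContDiff ℝ 2 (v ∘ Prod.swap) := contDiff_comp_swap hv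
  have hX : ContDiff ℝ 1 (pderivX (v ∘ Prod.swap)) := contDiff_pderivX hswap one_add_one_eq_two.le
  have hXX : Measurable (pderivX (pderivX (v ∘ Prod.swap))) := measurable_pderivX hX.continuous
  have hYY : pderivY (pderivY v) = pderivX (pderivX (v ∘ Prod.swap)) ∘ Prod.swap := rfl
  rw [errY_eq_errX_comp_swap, hYY, eL2_comp_swap, eL2_comp_swap]
  exact eL2_errX_le hN (contDiff_sliceX hswap) hXX

theorem natCast_inv_le_one (hN : 0 < N) : (N : ℝ≥0∞)⁻¹ ≤ 1 :=
  ENNReal.inv_le_one.2 (mod_cast hN)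

theorem eH1_errX_le (hN : 0 < N) (hv : ContDiff ℝ 2 v) :
    eH1 (errX N v) ≤
      (N : ℝ≥0∞)⁻¹ * (2 * eL2 (pderivX (pderivX v)) + eL2 (pderivX (pderivY v))) := by
  have hvX : ContDiff ℝ 1 (pderivX v) := contDiff_pderivX hv one_add_one_eq_two.le
  have hvY : ContDiff ℝ 1 (pderivY v) := contDiff_pderivY hv one_add_one_eq_two.le
  have hvXX := measurable_pderivX hvX.continuous
  have hX : eL2 (pderivX (errX N v)) ≤ (N : ℝ≥0∞)⁻¹ * eL2 (pderivX (pderivX v)) :=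
    eL2_pderivX_errX_le hN (contDiff_sliceX hv) hvXX
  have hY : eL2 (pderivY (errX N v)) ≤ (N : ℝ≥0∞)⁻¹ * eL2 (pderivX (pderivY v)) := by
    rw [pderivY_errX (hv.differentiable two_ne_zero)]
    exact eL2_errX_le_pderivX hN (contDiff_sliceX hvY) (measurable_pderivX hvY.continuous)
  have h0 : eL2 (errX N v) ≤ (N : ℝ≥0∞)⁻¹ * eL2 (pderivX (pderivX v)) := by
    refine (eL2_errX_le hN (contDiff_sliceX hv) hvXX).trans ?_
    gcongr
    exact pow_le_of_le_one zero_le (natCast_inv_le_one hN) two_ne_zero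
  refine (add_le_add (add_le_add hX hY) h0).trans_eq ?_
  ring

theorem eH1_errY_le (hN : 0 < N) (hv : ContDiff ℝ 2 v) :
    eH1 (errY N v) ≤
      (N : ℝ≥0∞)⁻¹ * (2 * eL2 (pderivY (pderivY v)) + eL2 (pderivX (pderivY v))) := by
  have hYY : pderivY (pderivY v) = pderivX (pderivX (v ∘ Prod.swap)) ∘ Prod.swap := rfl
  have hYX : pderivY (pderivX v) = pderivX (pderivY (v ∘ Prod.swap)) ∘ Prod.swap := rfl
  rw [errY_eq_errX_comp_swap, eH1_comp_swap, pderivX_pderivY_comm hv, hYY, hYX, eL2_comp_swap,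
    eL2_comp_swap]
  exact eH1_errX_le hN (contDiff_comp_swap hv)

theorem eL2_pderivX_pderivX_errY_le (hN : 0 < N) (hv : ContDiff ℝ 4 v) :
    eL2 (pderivX (pderivX (errY N v))) ≤ (N : ℝ≥0∞)⁻¹ ^ 2 * eL2 (uxxyy v) := by
  have hvX : ContDiff ℝ 3 (pderivX v) := contDiff_pderivX hv (by norm_num)
  have hvXX : ContDiff ℝ 2 (pderivX (pderivX v)) := contDiff_pderivX hvX (by norm_num)
  rw [pderivX_errY (hv.differentiable (by norm_num)),
    pderivX_errY (hvX.differentiable (by norm_num)), ← pderivY_pderivY_pderivX_pderivX hv]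
  exact eL2_errY_le hN hvXX

theorem measurable_pderivX_pderivX_errY (hv : ContDiff ℝ 2 v) :
    Measurable (pderivX (pderivX (errY N v))) := by
  rw [pderivX_errY (hv.differentiable two_ne_zero)]
  exact measurable_pderivX
    (continuous_errY (contDiff_pderivX hv one_add_one_eq_two.le : ContDiff ℝ 1 _).continuous)

theorem eL2_pderivX_errX_errY_le (hM : 0 < M) (hN : 0 < N) (hv : ContDiff ℝ 4 v) :
    eL2 (pderivX (errX M (errY N v))) ≤ (M : ℝ≥0∞)⁻¹ * (N : ℝ≥0∞)⁻¹ ^ 2 * eL2 (uxxyy v) := by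
  have hv₂ : ContDiff ℝ 2 v := hv.of_le (by norm_num)
  calc eL2 (pderivX (errX M (errY N v)))
      ≤ (M : ℝ≥0∞)⁻¹ * eL2 (pderivX (pderivX (errY N v))) :=
        eL2_pderivX_errX_le hM (contDiff_errY_sliceX hv₂) (measurable_pderivX_pderivX_errY hv₂)
    _ ≤ (M : ℝ≥0∞)⁻¹ * ((N : ℝ≥0∞)⁻¹ ^ 2 * eL2 (uxxyy v)) := by
        gcongr
        exact eL2_pderivX_pderivX_errY_le hN hv
    _ = (M : ℝ≥0∞)⁻¹ * (N : ℝ≥0∞)⁻¹ ^ 2 * eL2 (uxxyy v) := (mul_assoc _ _ _).symm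

theorem eL2_pderivY_errX_errY_le (hM : 0 < M) (hN : 0 < N) (hv : ContDiff ℝ 4 v) :
    eL2 (pderivY (errX M (errY N v))) ≤ (M : ℝ≥0∞)⁻¹ ^ 2 * (N : ℝ≥0∞)⁻¹ * eL2 (uxxyy v) := by
  have hswap : pderivY (errY N (errX M v)) =
      pderivX (errX N (errY M (v ∘ Prod.swap))) ∘ Prod.swap := rfl
  have huxxyy : uxxyy v = pderivY (pderivY (pderivX (pderivX (v ∘ Prod.swap)))) ∘ Prod.swap := rfl
  rw [errX_errY_comm, hswap, huxxyy, eL2_comp_swap, eL2_comp_swap,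
    pderivY_pderivY_pderivX_pderivX (contDiff_comp_swap hv), mul_comm (_ ^ 2)]
  exact eL2_pderivX_errX_errY_le hN hM (contDiff_comp_swap hv)

theorem eL2_errX_errY_le (hM : 0 < M) (hN : 0 < N) (hv : ContDiff ℝ 4 v) :
    eL2 (errX M (errY N v)) ≤ (M : ℝ≥0∞)⁻¹ ^ 2 * (N : ℝ≥0∞)⁻¹ ^ 2 * eL2 (uxxyy v) := by
  have hv₂ : ContDiff ℝ 2 v := hv.of_le (by norm_num)
  calc eL2 (errX M (errY N v))
      ≤ (M : ℝ≥0∞)⁻¹ ^ 2 * eL2 (pderivX (pderivX (errY N v))) :=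
        eL2_errX_le hM (contDiff_errY_sliceX hv₂) (measurable_pderivX_pderivX_errY hv₂)
    _ ≤ (M : ℝ≥0∞)⁻¹ ^ 2 * ((N : ℝ≥0∞)⁻¹ ^ 2 * eL2 (uxxyy v)) := by
        gcongr
        exact eL2_pderivX_pderivX_errY_le hN hv
    _ = (M : ℝ≥0∞)⁻¹ ^ 2 * (N : ℝ≥0∞)⁻¹ ^ 2 * eL2 (uxxyy v) := (mul_assoc _ _ _).symm

theorem eH1_errX_errY_le (hM : 0 < M) (hN : 0 < N) (hv : ContDiff ℝ 4 v) :
    eH1 (errX M (errY N v)) ≤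
      2 * (M : ℝ≥0∞)⁻¹ * (N : ℝ≥0∞)⁻¹ * ((M : ℝ≥0∞)⁻¹ + (N : ℝ≥0∞)⁻¹) * eL2 (uxxyy v) := by
  calc eH1 (errX M (errY N v))
      ≤ (M : ℝ≥0∞)⁻¹ * (N : ℝ≥0∞)⁻¹ ^ 2 * eL2 (uxxyy v) +
          (M : ℝ≥0∞)⁻¹ ^ 2 * (N : ℝ≥0∞)⁻¹ * eL2 (uxxyy v) +
          (M : ℝ≥0∞)⁻¹ ^ 2 * (N : ℝ≥0∞)⁻¹ ^ 2 * eL2 (uxxyy v) :=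
        add_le_add (add_le_add (eL2_pderivX_errX_errY_le hM hN hv)
          (eL2_pderivY_errX_errY_le hM hN hv)) (eL2_errX_errY_le hM hN hv)
    _ ≤ (M : ℝ≥0∞)⁻¹ * (N : ℝ≥0∞)⁻¹ ^ 2 * eL2 (uxxyy v) +
          (M : ℝ≥0∞)⁻¹ ^ 2 * (N : ℝ≥0∞)⁻¹ * eL2 (uxxyy v) +
          (M : ℝ≥0∞)⁻¹ * (N : ℝ≥0∞)⁻¹ ^ 2 * eL2 (uxxyy v) := by
        gcongr
        exact pow_le_of_le_one zero_le (natCast_inv_le_one hM) two_ne_zero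
    _ ≤ 2 * ((M : ℝ≥0∞)⁻¹ * (N : ℝ≥0∞)⁻¹ ^ 2 * eL2 (uxxyy v) +
          (M : ℝ≥0∞)⁻¹ ^ 2 * (N : ℝ≥0∞)⁻¹ * eL2 (uxxyy v)) := by
        rw [two_mul]
        gcongr
        exact le_self_add
    _ = 2 * (M : ℝ≥0∞)⁻¹ * (N : ℝ≥0∞)⁻¹ * ((M : ℝ≥0∞)⁻¹ + (N : ℝ≥0∞)⁻¹) * eL2 (uxxyy v) := by
        ring

end DirectionalErrors

section SliceDifferentiability

/-- The continuous functions on the plane whose restriction to every horizontal and every vertical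
line is differentiable almost everywhere. They contain the `C¹` functions and are stable under
`errX` and `errY`; on them the almost everywhere defined partial derivatives are additive. -/
def aeSliceDifferentiable : AddSubgroup (ℝ × ℝ → ℝ) where
  carrier := {f | Continuous f ∧ (∀ y, ∀ᵐ x, DifferentiableAt ℝ (fun t => f (t, y)) x) ∧
    ∀ x, ∀ᵐ y, DifferentiableAt ℝ (fun t => f (x, t)) y}
  zero_mem' := ⟨continuous_const, fun _ => ae_of_all _ fun _ => differentiableAt_const _,
    fun _ => ae_of_all _ fun _ => differentiableAt_const _⟩
  add_mem' := fun ⟨hf, hfX, hfY⟩ ⟨hg, hgX, hgY⟩ => ⟨hf.add hg,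
    fun y => by filter_upwards [hfX y, hgX y] with x using DifferentiableAt.add,
    fun x => by filter_upwards [hfY x, hgY x] with y using DifferentiableAt.add⟩
  neg_mem' := fun ⟨hf, hfX, hfY⟩ => ⟨hf.neg,
    fun y => by filter_upwards [hfX y] with x using DifferentiableAt.neg,
    fun x => by filter_upwards [hfY x] with y using DifferentiableAt.neg⟩

variable {f g : ℝ × ℝ → ℝ}

theorem comp_swap_mem_aeSliceDifferentiable (hf : f ∈ aeSliceDifferentiable) :
    f ∘ Prod.swap ∈ aeSliceDifferentiable :=
  ⟨hf.1.comp continuous_swap, hf.2.2, hf.2.1⟩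

theorem mem_aeSliceDifferentiable_of_contDiff (hf : ContDiff ℝ 1 f) :
    f ∈ aeSliceDifferentiable :=
  ⟨hf.continuous,
    fun y => ae_of_all _ fun _ => (contDiff_sliceX hf y).differentiable one_ne_zero _,
    fun x => ae_of_all _ fun _ =>
      (contDiff_sliceX (contDiff_comp_swap hf) x).differentiable one_ne_zero _⟩

theorem errX_mem_aeSliceDifferentiable (N : ℕ) (hf : f ∈ aeSliceDifferentiable) :
    errX N f ∈ aeSliceDifferentiable := by
  refine ⟨continuous_errX hf.1, fun y => ?_, fun x => ?_⟩
  · filter_upwards [hf.2.1 y, ae_differentiableAt_hat N] with x hfx hhat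
    exact hfx.fun_sub (DifferentiableAt.fun_sum fun i _ =>
      (hhat i).const_mul (f ((i : ℝ) / N, y)))
  · have hnodes : ∀ᵐ y, ∀ i : ℕ, DifferentiableAt ℝ (fun t => f ((i : ℝ) / N, t)) y :=
      ae_all_iff.2 fun i => hf.2.2 (i / N)
    filter_upwards [hf.2.2 x, hnodes] with y hfy hfnodes
    exact hfy.fun_sub (DifferentiableAt.fun_sum fun i _ =>
      (hfnodes i).mul_const (hat N i x))

theorem errY_mem_aeSliceDifferentiable (N : ℕ) (hf : f ∈ aeSliceDifferentiable) :
    errY N f ∈ aeSliceDifferentiable :=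
  comp_swap_mem_aeSliceDifferentiable
    (errX_mem_aeSliceDifferentiable N (comp_swap_mem_aeSliceDifferentiable hf))

theorem ae_differentiableAt_sliceX (hf : f ∈ aeSliceDifferentiable) :
    ∀ᵐ p : ℝ × ℝ, DifferentiableAt ℝ (fun x => f (x, p.2)) p.1 := by
  have hmeas : MeasurableSet {q : ℝ × ℝ | DifferentiableAt ℝ (fun x => f (x, q.1)) q.2} :=
    measurableSet_of_differentiableAt_with_param ℝ (f := fun y x => f (x, y))
      (hf.1.comp continuous_swap)
  have hswap : ∀ᵐ q ∂(volume : Measure ℝ).prod volume,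
      DifferentiableAt ℝ (fun x => f (x, q.1)) q.2 :=
    (Measure.ae_prod_iff_ae_ae hmeas).2 (ae_of_all _ hf.2.1)
  exact Measure.measurePreserving_swap.quasiMeasurePreserving.ae hswap

theorem eL2_pderivX_add_le (hf : f ∈ aeSliceDifferentiable) (hg : g ∈ aeSliceDifferentiable) :
    eL2 (pderivX (f + g)) ≤ eL2 (pderivX f) + eL2 (pderivX g) := by
  have hadd : pderivX (f + g) =ᵐ[volume.restrict Omega2] pderivX f + pderivX g :=
    ae_restrict_of_ae <| by
      filter_upwards [ae_differentiableAt_sliceX hf, ae_differentiableAt_sliceX hg] with p hfp hgp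
      exact deriv_add hfp hgp
  exact (eLpNorm_congr_ae hadd).trans_le
    (eLpNorm_add_le (measurable_pderivX hf.1).aestronglyMeasurable
      (measurable_pderivX hg.1).aestronglyMeasurable one_le_two)

theorem eL2_pderivY_add_le (hf : f ∈ aeSliceDifferentiable) (hg : g ∈ aeSliceDifferentiable) :
    eL2 (pderivY (f + g)) ≤ eL2 (pderivY f) + eL2 (pderivY g) := by
  simp only [pderivY_eq_pderivX_comp_swap, eL2_comp_swap]
  exact eL2_pderivX_add_le (comp_swap_mem_aeSliceDifferentiable hf)
    (comp_swap_mem_aeSliceDifferentiable hg)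

theorem eH1_add_le (hf : f ∈ aeSliceDifferentiable) (hg : g ∈ aeSliceDifferentiable) :
    eH1 (f + g) ≤ eH1 f + eH1 g := by
  have hval : eL2 (f + g) ≤ eL2 f + eL2 g :=
    eLpNorm_add_le hf.1.aestronglyMeasurable hg.1.aestronglyMeasurable one_le_two
  refine (add_le_add (add_le_add (eL2_pderivX_add_le hf hg) (eL2_pderivY_add_le hf hg))
    hval).trans_eq ?_
  unfold eH1
  ring

theorem eH1_neg (f : ℝ × ℝ → ℝ) : eH1 (-f) = eH1 f := by
  have hX : pderivX (-f) = -pderivX f := funext fun _ => deriv.neg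
  have hY : pderivY (-f) = -pderivY f := funext fun _ => deriv.neg
  simp only [eH1, eL2, hX, hY, eLpNorm_neg]

theorem eH1_sub_le (hf : f ∈ aeSliceDifferentiable) (hg : g ∈ aeSliceDifferentiable) :
    eH1 (f - g) ≤ eH1 f + eH1 g := by
  rw [sub_eq_add_neg, ← eH1_neg g]
  exact eH1_add_le hf (neg_mem hg)

theorem eH1_zero : eH1 0 = 0 := by
  have hX : pderivX 0 = 0 := funext fun _ => deriv_const _ _
  have hY : pderivY 0 = 0 := funext fun _ => deriv_const _ _
  simp [eH1, eL2, hX, hY]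

theorem eH1_sum_le {ι : Type*} {s : Finset ι} {F : ι → ℝ × ℝ → ℝ}
    (hF : ∀ i ∈ s, F i ∈ aeSliceDifferentiable) : eH1 (∑ i ∈ s, F i) ≤ ∑ i ∈ s, eH1 (F i) :=
  Finset.le_sum_of_subadditive_on_pred eH1 (· ∈ aeSliceDifferentiable) eH1_zero.le
    (fun _ _ => eH1_add_le) (fun _ _ => add_mem) F hF

end SliceDifferentiability

section Telescoping

theorem interp_eq_interpX_interpY (M N : ℕ) (u : ℝ × ℝ → ℝ) :
    interp M N u = interpX M (interpY N u) := by
  funext p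
  simp only [interp, interpX, interpY, Finset.sum_mul]
  exact sum_congr rfl fun i _ => sum_congr rfl fun j _ => by ring

theorem interp_eq_errors (M N : ℕ) (u : ℝ × ℝ → ℝ) :
    interp M N u = u - errX M u - errY N u + errX M (errY N u) := by
  have hsub : interpX M (errY N u) = interpX M u - interpX M (interpY N u) := by
    funext p
    simp only [interpX, errY, sub_mul, Finset.sum_sub_distrib, Pi.sub_apply]
  rw [interp_eq_interpX_interpY]
  funext p
  simp only [Pi.add_apply, Pi.sub_apply, errX, errY, hsub]
  ring

theorem sum_Icc_one_eq_sum_range {A : Type*} [AddCommMonoid A] (F : ℕ → ℕ → A) (k : ℕ) :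
    ∑ i ∈ Finset.Icc 1 k, F i (k + 1 - i) = ∑ i ∈ range k, F (i + 1) (k - i) := by
  rw [← Finset.Ico_add_one_right_eq_Icc, Finset.range_eq_Ico, ← zero_add 1,
    ← Finset.sum_Ico_add' _ 0 k 1]
  simp only [Nat.add_sub_add_right]

theorem sub_msInterp_eq (N k : ℕ) (u : ℝ × ℝ → ℝ) :
    (fun p => u p - msInterp N k u p) = errX N u + errY N u
      - ∑ i ∈ range (k + 1), errX (N / 2 ^ i) (errY (N / 2 ^ (k - i)) u)
      + ∑ i ∈ range k, errX (N / 2 ^ (i + 1)) (errY (N / 2 ^ (k - i)) u) := by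
  have hms : msInterp N k u = ∑ i ∈ range (k + 1), interp (N / 2 ^ i) (N / 2 ^ (k - i)) u
      - ∑ i ∈ range k, interp (N / 2 ^ (i + 1)) (N / 2 ^ (k - i)) u := by
    rw [← sum_Icc_one_eq_sum_range fun i j => interp (N / 2 ^ i) (N / 2 ^ j) u]
    funext p
    simp only [msInterp, Pi.sub_apply, Finset.sum_apply]
  have hX : ∑ i ∈ range (k + 1), errX (N / 2 ^ i) u =
      ∑ i ∈ range k, errX (N / 2 ^ (i + 1)) u + errX N u := by
    rw [Finset.sum_range_succ', pow_zero, Nat.div_one]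
  have hY : ∑ i ∈ range (k + 1), errY (N / 2 ^ (k - i)) u =
      ∑ i ∈ range k, errY (N / 2 ^ (k - i)) u + errY N u := by
    rw [Finset.sum_range_succ, Nat.sub_self, pow_zero, Nat.div_one]
  change u - msInterp N k u = _
  simp only [hms, interp_eq_errors, Finset.sum_add_distrib, Finset.sum_sub_distrib, hX, hY,
    Finset.sum_const, card_range, succ_nsmul]
  abel

end Telescoping

section MultiscaleError

theorem sum_two_pow_antidiagonal_le (k : ℕ) :
    ∑ i ∈ range (k + 1), 2 ^ (i + (k - i)) * (2 ^ i + 2 ^ (k - i)) ≤ 4 ^ (k + 1) := by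
  have hgeom : ∑ i ∈ range (k + 1), 2 ^ i ≤ 2 ^ (k + 1) :=
    (Nat.geomSum_lt le_rfl fun i hi => mem_range.1 hi).le
  calc ∑ i ∈ range (k + 1), 2 ^ (i + (k - i)) * (2 ^ i + 2 ^ (k - i))
      = ∑ i ∈ range (k + 1), 2 ^ k * (2 ^ i + 2 ^ (k - i)) :=
        sum_congr rfl fun i hi => by
          rw [Nat.add_sub_cancel' (Nat.lt_succ_iff.1 (mem_range.1 hi))]
    _ = 2 ^ k * (∑ i ∈ range (k + 1), 2 ^ i + ∑ i ∈ range (k + 1), 2 ^ i) := by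
        rw [← Finset.mul_sum, Finset.sum_add_distrib, Finset.sum_flip fun i => 2 ^ i]
    _ ≤ 2 ^ k * (2 ^ (k + 1) + 2 ^ (k + 1)) := by gcongr
    _ = 4 ^ (k + 1) := by
        rw [show 4 = 2 ^ 2 from rfl, ← pow_mul]
        ring

theorem sum_two_pow_inner_antidiagonal_le (k : ℕ) :
    ∑ i ∈ range k, 2 ^ (i + 1 + (k - i)) * (2 ^ (i + 1) + 2 ^ (k - i)) ≤ 4 ^ (k + 2) := by
  refine le_trans ?_ (sum_two_pow_antidiagonal_le (k + 1))
  rw [Finset.sum_range_succ, Finset.sum_range_succ']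
  simp only [Nat.add_sub_add_right]
  exact (Nat.le_add_right _ _).trans (Nat.le_add_right _ _)

variable {N k i j : ℕ} {u : ℝ × ℝ → ℝ}

theorem inv_natCast_div {d : ℕ} (hd : d ∣ N) (hd₀ : d ≠ 0) :
    ((N / d : ℕ) : ℝ≥0∞)⁻¹ = d * (N : ℝ≥0∞)⁻¹ := by
  obtain ⟨e, rfl⟩ := hd
  have hd₁ : (d : ℝ≥0∞) ≠ 0 := Nat.cast_ne_zero.2 hd₀
  have hd₂ : (d : ℝ≥0∞) ≠ ∞ := ENNReal.natCast_ne_top d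
  rw [Nat.mul_div_cancel_left e (Nat.pos_of_ne_zero hd₀), Nat.cast_mul,
    ENNReal.mul_inv (.inl hd₁) (.inl hd₂), ← mul_assoc, ENNReal.mul_inv_cancel hd₁ hd₂, one_mul]

theorem eH1_errX_errY_two_pow_le (hN : 0 < N) (hi : 2 ^ i ∣ N) (hj : 2 ^ j ∣ N)
    (hu : ContDiff ℝ 4 u) :
    eH1 (errX (N / 2 ^ i) (errY (N / 2 ^ j) u)) ≤
      (2 ^ (i + j) * (2 ^ i + 2 ^ j) : ℕ) * (2 * (N : ℝ≥0∞)⁻¹ ^ 3 * eL2 (uxxyy u)) := by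
  refine (eH1_errX_errY_le (Nat.div_pos (Nat.le_of_dvd hN hi) (by positivity))
    (Nat.div_pos (Nat.le_of_dvd hN hj) (by positivity)) hu).trans_eq ?_
  rw [inv_natCast_div hi (by positivity), inv_natCast_div hj (by positivity)]
  push_cast
  ring

theorem eH1_sub_msInterp_le_sum (N k : ℕ) (hu : ContDiff ℝ 1 u) :
    eH1 (fun p => u p - msInterp N k u p) ≤ eH1 (errX N u) + eH1 (errY N u)
      + ∑ i ∈ range (k + 1), eH1 (errX (N / 2 ^ i) (errY (N / 2 ^ (k - i)) u))
      + ∑ i ∈ range k, eH1 (errX (N / 2 ^ (i + 1)) (errY (N / 2 ^ (k - i)) u)) := by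
  have hu' := mem_aeSliceDifferentiable_of_contDiff hu
  have hX := errX_mem_aeSliceDifferentiable N hu'
  have hY := errY_mem_aeSliceDifferentiable N hu'
  have hXY (M M' : ℕ) : errX M (errY M' u) ∈ aeSliceDifferentiable :=
    errX_mem_aeSliceDifferentiable M (errY_mem_aeSliceDifferentiable M' hu')
  have hdiag := sum_mem fun i (_ : i ∈ range (k + 1)) => hXY (N / 2 ^ i) (N / 2 ^ (k - i))
  have hinner := sum_mem fun i (_ : i ∈ range k) => hXY (N / 2 ^ (i + 1)) (N / 2 ^ (k - i))
  rw [sub_msInterp_eq]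
  refine (eH1_add_le (sub_mem (add_mem hX hY) hdiag) hinner).trans (add_le_add ?_ ?_)
  · exact (eH1_sub_le (add_mem hX hY) hdiag).trans
      (add_le_add (eH1_add_le hX hY) (eH1_sum_le fun _ _ => hXY _ _))
  · exact eH1_sum_le fun _ _ => hXY _ _

theorem eH1_sub_msInterp_le (hN : 0 < N) (hk : 2 ^ k ∣ N) (hu : ContDiff ℝ 4 u) :
    eH1 (fun p => u p - msInterp N k u p) ≤
      10 * ((N : ℝ≥0∞)⁻¹ *
          (eL2 (pderivX (pderivX u)) + eL2 (pderivX (pderivY u)) + eL2 (pderivY (pderivY u)))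
        + 4 ^ (k + 1) * (N : ℝ≥0∞)⁻¹ ^ 3 * eL2 (uxxyy u)) := by
  have hu₂ : ContDiff ℝ 2 u := hu.of_le (by norm_num)
  have hdvd {i : ℕ} (hi : i ≤ k) : 2 ^ i ∣ N := (pow_dvd_pow 2 hi).trans hk
  set h := (N : ℝ≥0∞)⁻¹
  set XX := eL2 (pderivX (pderivX u))
  set XY := eL2 (pderivX (pderivY u))
  set YY := eL2 (pderivY (pderivY u))
  set Q := eL2 (uxxyy u)
  have hdiag : ∑ i ∈ range (k + 1), eH1 (errX (N / 2 ^ i) (errY (N / 2 ^ (k - i)) u)) ≤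
      4 ^ (k + 1) * (2 * h ^ 3 * Q) := by
    refine (sum_le_sum fun i hi => eH1_errX_errY_two_pow_le hN
      (hdvd (Nat.lt_succ_iff.1 (mem_range.1 hi))) (hdvd (Nat.sub_le k i)) hu).trans ?_
    rw [← Finset.sum_mul, ← Nat.cast_sum]
    gcongr
    exact_mod_cast sum_two_pow_antidiagonal_le k
  have hinner : ∑ i ∈ range k, eH1 (errX (N / 2 ^ (i + 1)) (errY (N / 2 ^ (k - i)) u)) ≤
      4 ^ (k + 2) * (2 * h ^ 3 * Q) := by
    refine (sum_le_sum fun i hi => eH1_errX_errY_two_pow_le hN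
      (hdvd (mem_range.1 hi)) (hdvd (Nat.sub_le k i)) hu).trans ?_
    rw [← Finset.sum_mul, ← Nat.cast_sum]
    gcongr
    exact_mod_cast sum_two_pow_inner_antidiagonal_le k
  refine (eH1_sub_msInterp_le_sum N k (hu.of_le (by norm_num))).trans ?_
  refine (add_le_add (add_le_add (add_le_add (eH1_errX_le hN hu₂) (eH1_errY_le hN hu₂)) hdiag)
    hinner).trans ?_
  calc h * (2 * XX + XY) + h * (2 * YY + XY) + 4 ^ (k + 1) * (2 * h ^ 3 * Q)
        + 4 ^ (k + 2) * (2 * h ^ 3 * Q)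
      = 2 * (h * (XX + XY + YY)) + 10 * (4 ^ (k + 1) * h ^ 3 * Q) := by ring
    _ ≤ 10 * (h * (XX + XY + YY)) + 10 * (4 ^ (k + 1) * h ^ 3 * Q) := by
        gcongr
        norm_num
    _ = 10 * (h * (XX + XY + YY) + 4 ^ (k + 1) * h ^ 3 * Q) := by ring

theorem continuous_msInterp (N k : ℕ) (u : ℝ × ℝ → ℝ) : Continuous (msInterp N k u) := by
  have hhat : ∀ M i, Continuous (hat M i) := fun M i => (lipschitzWith_hat M i).continuous
  unfold msInterp interp
  fun_prop

theorem L2norm_nonneg (f : ℝ × ℝ → ℝ) : 0 ≤ L2norm f := Real.sqrt_nonneg _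

theorem semi2_nonneg (u : ℝ × ℝ → ℝ) : 0 ≤ semi2 u :=
  add_nonneg (add_nonneg (L2norm_nonneg _) (L2norm_nonneg _)) (L2norm_nonneg _)

theorem ofReal_semi2 (hu : ContDiff ℝ 2 u) :
    ENNReal.ofReal (semi2 u) =
      eL2 (pderivX (pderivX u)) + eL2 (pderivX (pderivY u)) + eL2 (pderivY (pderivY u)) := by
  have hX : ContDiff ℝ 1 (pderivX u) := contDiff_pderivX hu (by norm_num)
  have hY : ContDiff ℝ 1 (pderivY u) := contDiff_pderivY hu (by norm_num)
  have hXX : ContDiff ℝ 0 (pderivX (pderivX u)) := contDiff_pderivX hX (by norm_num)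
  have hXY : ContDiff ℝ 0 (pderivX (pderivY u)) := contDiff_pderivX hY (by norm_num)
  have hYY : ContDiff ℝ 0 (pderivY (pderivY u)) := contDiff_pderivY hY (by norm_num)
  rw [semi2, ENNReal.ofReal_add (add_nonneg (L2norm_nonneg _) (L2norm_nonneg _)) (L2norm_nonneg _),
    ENNReal.ofReal_add (L2norm_nonneg _) (L2norm_nonneg _),
    ofReal_L2norm_of_continuous hXX.continuous, ofReal_L2norm_of_continuous hXY.continuous,
    ofReal_L2norm_of_continuous hYY.continuous]

theorem ofReal_L2norm_uxxyy (hu : ContDiff ℝ 4 u) :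
    ENNReal.ofReal (L2norm (uxxyy u)) = eL2 (uxxyy u) := by
  have hY : ContDiff ℝ 3 (pderivY u) := contDiff_pderivY hu (by norm_num)
  have hYY : ContDiff ℝ 2 (pderivY (pderivY u)) := contDiff_pderivY hY (by norm_num)
  have hXYY : ContDiff ℝ 1 (pderivX (pderivY (pderivY u))) := contDiff_pderivX hYY (by norm_num)
  have hXXYY : ContDiff ℝ 0 (uxxyy u) := contDiff_pderivX hXYY (by norm_num)
  exact ofReal_L2norm_of_continuous hXXYY.continuous

theorem energyNorm_sub_msInterp_le (hN : 0 < N) (hk : 2 ^ k ∣ N) (hu : ContDiff ℝ 4 u) :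
    energyNorm (fun p => u p - msInterp N k u p) ≤
      10 * ((N : ℝ)⁻¹ * semi2 u + 4 ^ (k + 1) * ((N : ℝ) ^ 3)⁻¹ * L2norm (uxxyy u)) := by
  have hbound := (ofReal_energyNorm_le_eH1 (hu.continuous.sub (continuous_msInterp N k u))).trans
    (eH1_sub_msInterp_le hN hk hu)
  have hsemi := semi2_nonneg u
  have hmixed := L2norm_nonneg (uxxyy u)
  refine (ENNReal.ofReal_le_ofReal_iff (by positivity)).1 (hbound.trans_eq ?_)
  rw [← ofReal_semi2 (hu.of_le (by norm_num)), ← ofReal_L2norm_uxxyy hu,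
    ← ofReal_inv_natCast hN, ENNReal.ofReal_mul (by norm_num),
    ENNReal.ofReal_add (by positivity) (by positivity),
    ENNReal.ofReal_mul (by positivity), ENNReal.ofReal_mul (by positivity),
    ENNReal.ofReal_mul (by positivity), ← inv_pow, ENNReal.ofReal_pow (by positivity),
    ENNReal.ofReal_pow (by norm_num), ENNReal.ofReal_ofNat, ENNReal.ofReal_ofNat]

end MultiscaleError

section CutOff

theorem exists_contDiff_eqOn_of_contDiffOn {E : Type*} [NormedAddCommGroup E] [NormedSpace ℝ E]
    [FiniteDimensional ℝ E] {n : ℕ∞} {s U : Set E} {f : E → ℝ} (hs : IsClosed s) (hU : IsOpen U)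
    (hsU : s ⊆ U) (hf : ContDiffOn ℝ n f U) : ∃ g : E → ℝ, ContDiff ℝ n g ∧ Set.EqOn f g s := by
  obtain ⟨χ, hχ₀, hχ₁, -⟩ := exists_contMDiffMap_zero_one_nhds_of_isClosed (n := n)
    (modelWithCornersSelf ℝ E) hU.isClosed_compl hs
    (Set.disjoint_compl_left_iff_subset.2 hsU)
  refine ⟨fun x => χ x * f x, contDiff_iff_contDiffAt.2 fun x => ?_, fun x hx => ?_⟩
  · by_cases hx : x ∈ U
    · exact χ.contMDiff.contDiff.contDiffAt.mul (hf.contDiffAt (hU.mem_nhds hx))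
    · refine contDiffAt_const (c := (0 : ℝ)) |>.congr_of_eventuallyEq ?_
      filter_upwards [hχ₀.filter_mono (nhds_le_nhdsSet hx)] with z hz
      rw [hz, zero_mul]
  · simp only [hχ₁.self_of_nhdsSet x hx, one_mul]

theorem node_mem_Icc {N i : ℕ} (hi : i ∈ range (N + 1)) : (i : ℝ) / N ∈ Set.Icc (0 : ℝ) 1 :=
  ⟨by positivity, div_le_one_of_le₀
    (by exact_mod_cast Nat.lt_succ_iff.1 (mem_range.1 hi)) (by positivity)⟩

theorem interp_congr {u w : ℝ × ℝ → ℝ} (h : Set.EqOn u w unitSquare) (M N : ℕ) :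
    interp M N u = interp M N w := by
  funext p
  refine sum_congr rfl fun i hi => sum_congr rfl fun j hj => ?_
  rw [h ⟨node_mem_Icc hi, node_mem_Icc hj⟩]

end CutOff

theorem multiscale_interpolant_error_bound_general {N k : ℕ} (hN : 0 < N) (hk : 2 ^ k ∣ N)
    {u : ℝ × ℝ → ℝ} (hu : C4Near u) :
    energyNorm (fun p => u p - msInterp N k u p) ≤
      10 * ((N : ℝ)⁻¹ * semi2 u + 4 ^ (k + 1) * ((N : ℝ) ^ 3)⁻¹ * L2norm (uxxyy u)) := by
  obtain ⟨U, hU, hsub, hu⟩ := hu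
  obtain ⟨w, hw, huw⟩ := exists_contDiff_eqOn_of_contDiffOn (n := 4)
    (isClosed_Icc.prod isClosed_Icc) hU hsub hu
  have hΩ : Set.EqOn u w Omega2 := huw.mono Omega2_subset_unitSquare
  have hX := pderivX_eqOn isOpen_Omega2 hΩ
  have hY := pderivY_eqOn isOpen_Omega2 hΩ
  have hXX := pderivX_eqOn isOpen_Omega2 hX
  have hXY := pderivX_eqOn isOpen_Omega2 hY
  have hYY := pderivY_eqOn isOpen_Omega2 hY
  have hXXYY : Set.EqOn (uxxyy u) (uxxyy w) Omega2 :=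
    pderivX_eqOn isOpen_Omega2 (pderivX_eqOn isOpen_Omega2 hYY)
  have herr : Set.EqOn (fun p => u p - msInterp N k u p) (fun p => w p - msInterp N k w p)
      Omega2 := fun p hp => by simp only [msInterp, interp_congr huw, hΩ hp]
  have hsemi : semi2 u = semi2 w := by
    rw [semi2, semi2, L2norm_congr hXX, L2norm_congr hXY, L2norm_congr hYY]
  rw [energyNorm_congr herr, hsemi, L2norm_congr hXXYY]
  exact energyNorm_sub_msInterp_le hN hk hw

/-- Energy-norm error bound for the multiscale interpolant:
`|||u − I^{(k)}_{N,N}u||| ≤ C (N⁻¹ |u|₂ + 4^{k+1} N⁻³ ‖∂⁴u/∂x²∂y²‖_{0,Ω})` for `N = 2^m`,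
`1 ≤ k ≤ m`. -/
theorem multiscale_interpolant_error_bound :
    ∃ C : ℝ, 0 < C ∧ ∀ (m k : ℕ), 1 ≤ m → 1 ≤ k → k ≤ m →
      ∀ u : ℝ × ℝ → ℝ, C4Near u → VanishOnBoundary u →
        energyNorm (fun p => u p - msInterp (2 ^ m) k u p) ≤
          C * (((2 : ℝ) ^ m)⁻¹ * semi2 u +
            4 ^ (k + 1) * (((2 : ℝ) ^ m) ^ 3)⁻¹ * L2norm (uxxyy u)) := by
  refine ⟨10, by norm_num, fun m k _ _ hkm u hu _ => ?_⟩
  exact mod_cast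
    multiscale_interpolant_error_bound_general (Nat.two_pow_pos m) (pow_dvd_pow 2 hkm) hu
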